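/- Let k ≥ 2 be an integer, let 0 < ξ ≤ 1 be a constant, let G be a ξ-expanding k-graph on n vertices with average vertex degree d = d(G), and let j ∈ ℕ. If n^{1/(2j+1)} ≤ d ≤ (n/k)^{1/(2j)}, then, setting β = ⌈(n/d^{2j+1}) · log n⌉, the cop number of G satisfies c(G) ≤ 20 · ξ^{-2} · d^j · β. -/

import Mathlib

open scoped BigOperators

/-- A `k`-uniform hypergraph on vertex set `Fin n`. -/
structure KGraph (n k : ℕ) where
  edges : Finset (Finset (Fin n))
  uniform : ∀ e ∈ edges, e.card = k

namespace KGraph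

variable {n k : ℕ}

/-- A loose path of edges from `x` to `y`: a nonempty list of edges, the first containing `x`,
the last containing `y`, with consecutive edges intersecting. -/
def IsLoosePath (G : KGraph n k) (x y : Fin n) (l : List (Finset (Fin n))) : Prop :=
  l ≠ [] ∧ (∀ e ∈ l, e ∈ G.edges) ∧ (∀ e ∈ l.head?, x ∈ e) ∧
    (∀ e ∈ l.getLast?, y ∈ e) ∧ l.Chain' (fun e f => (e ∩ f).Nonempty)

/-- Distance between two vertices: the smallest length of a loose path between them
(`0` if they are equal, `⊤` if there is no such path). -/
noncomputable def dist (G : KGraph n k) (x y : Fin n) : ℕ∞ :=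
  if x = y then 0
  else sInf ((fun l : List (Finset (Fin n)) => (l.length : ℕ∞)) '' {l | G.IsLoosePath x y l})

/-- Distance between two sets of vertices: the minimum over pairs. -/
noncomputable def setDist (G : KGraph n k) (A B : Set (Fin n)) : ℕ∞ :=
  ⨅ (x ∈ A) (y ∈ B), G.dist x y

/-- The closed `r`-th vertex-neighbourhood of a set of vertices. -/
noncomputable def vNhd (G : KGraph n k) (A : Set (Fin n)) (r : ℕ) : Set (Fin n) :=
  {v | G.setDist A {v} ≤ (r : ℕ∞)}

/-- The set of vertices covered by a set of edges. -/
def VB (B : Set (Finset (Fin n))) : Set (Fin n) :=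
  ⋃ e ∈ B, (e : Set (Fin n))

/-- The closed `r`-th vertex-neighbourhood of a set of edges. -/
noncomputable def vNhdE (G : KGraph n k) (B : Set (Finset (Fin n))) (r : ℕ) : Set (Fin n) :=
  G.vNhd (VB B) r

/-- The closed `r`-th edge-neighbourhood of a set of vertices: edges within distance `r - 1`. -/
noncomputable def eNhd (G : KGraph n k) (A : Set (Fin n)) (r : ℕ) : Set (Finset (Fin n)) :=
  {e | e ∈ G.edges ∧ G.setDist (e : Set (Fin n)) A ≤ ((r - 1 : ℕ) : ℕ∞)}

/-- The average vertex degree of `G`. -/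
noncomputable def avgDeg (G : KGraph n k) : ℝ :=
  (∑ v : Fin n, ((G.vNhd {v} 1).ncard : ℝ)) / n

/-- A `k`-graph on `n` vertices with average vertex degree `d ≥ k` is `ξ`-expanding if
(A.1) edge-neighbourhoods of vertices are not too large, (A.2) vertex-neighbourhoods of vertex
sets have size comparable to `|A| d^r`, and (A.3) vertex-neighbourhoods of edge sets are large. -/
def IsExpanding (G : KGraph n k) (ξ : ℝ) : Prop :=
  (k : ℝ) ≤ G.avgDeg ∧
  (∀ v : Fin n, ∀ r : ℕ, 1 ≤ r → G.avgDeg ^ r ≤ Real.sqrt ((n : ℝ) * k) →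
    ((G.eNhd {v} r).ncard : ℝ) ≤ ξ⁻¹ * G.avgDeg ^ r / k) ∧
  (∀ A : Set (Fin n), ∀ r : ℕ, 1 ≤ r →
    ξ * min ((A.ncard : ℝ) * G.avgDeg ^ r) (n : ℝ) ≤ ((G.vNhd A r).ncard : ℝ) ∧
    ((G.vNhd A r).ncard : ℝ) ≤ ξ⁻¹ * (A.ncard : ℝ) * G.avgDeg ^ r) ∧
  (∀ B : Set (Finset (Fin n)), B ⊆ (G.edges : Set (Finset (Fin n))) → ∀ r : ℕ, 1 ≤ r →
    ξ * min ((B.ncard : ℝ) * k * G.avgDeg ^ r) (n : ℝ) ≤ ((G.vNhdE B r).ncard : ℝ))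

/-- `CopsWin G c r` : with the cops currently on the vertices `c i`, the robber on `r`, and the
cops to move, the cops have a strategy to catch the robber. Either a cop is already on the
robber's vertex; or the cops can move (each by distance at most 1) so that a cop lands on the
robber; or the cops can move so that whatever the robber's reply, the cops still win. -/
inductive CopsWin (G : KGraph n k) {m : ℕ} : (Fin m → Fin n) → Fin n → Prop
  | caught (c : Fin m → Fin n) (r : Fin n) (i : Fin m) (h : c i = r) : CopsWin G c r
  | stepCaught (c c' : Fin m → Fin n) (r : Fin n)
      (hmove : ∀ i, G.dist (c i) (c' i) ≤ 1) (i : Fin m) (h : c' i = r) : CopsWin G c r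
  | step (c c' : Fin m → Fin n) (r : Fin n)
      (hmove : ∀ i, G.dist (c i) (c' i) ≤ 1)
      (h : ∀ r' : Fin n, G.dist r r' ≤ 1 → CopsWin G c' r') : CopsWin G c r

/-- The cop number of `G` : the least `m` such that `m` cops can be initially placed so as to
catch the robber wherever he starts. -/
noncomputable def copNumber (G : KGraph n k) : ℕ :=
  sInf {m : ℕ | ∃ c₀ : Fin m → Fin n, ∀ r₀ : Fin n, CopsWin G c₀ r₀}

/-- `G` is connected if all pairs of vertices are at finite distance. -/
def Connected (G : KGraph n k) : Prop := ∀ x y : Fin n, G.dist x y ≠ ⊤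

end KGraph

open Classical in
/-- The probability that the binomial random `k`-uniform hypergraph `G^k(n,p)` (each `k`-subset
of `[n]` an edge independently with probability `p`) satisfies the property `Q`. -/
noncomputable def ghProb (n k : ℕ) (p : ℝ) (Q : KGraph n k → Prop) : ℝ :=
  ∑ E ∈ (Finset.powersetCard k (Finset.univ : Finset (Fin n))).powerset,
    if h : ∀ e ∈ E, e.card = k then
      (if Q ⟨E, h⟩ then
        p ^ E.card * (1 - p) ^ ((Finset.powersetCard k (Finset.univ : Finset (Fin n))).card - E.card)
      else 0)
    else 0

/-! Let `B` be the ball of radius `j` around the robber's initial vertex. If cops can be matched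
injectively with the vertices of `B` so that each cop is within distance `j + 1` of its vertex, they
win: each walks to its vertex, and after `j + 1` cop moves every vertex that the robber may have
reached in his `j` moves is occupied. By Hall's theorem the matching exists as soon as every
`A ⊆ B` has at least `|A|` cops in its `(j + 1)`-st neighbourhood. For cops placed uniformly at
random, a Chernoff bound and a union bound over all balls `B` and all nonempty `A ⊆ B` show that
this holds with positive probability, since expansion makes these neighbourhoods large. -/

section RandomPlacement

open Finset Fintype

variable {ι α : Type*} [Fintype ι] [Fintype α] [DecidableEq α]

lemma sum_pow_card_filter_mem [DecidableEq ι] {R : Type*} [CommSemiring R] (S : Finset α) (x : R) :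
    ∑ c : ι → α, x ^ #{i | c i ∈ S} = (#S * x + #Sᶜ) ^ card ι := by
  have factor (c : ι → α) : x ^ #{i | c i ∈ S} = ∏ i, if c i ∈ S then x else 1 := by
    rw [prod_ite, prod_const, prod_const_one, mul_one]
  have single : ∑ v : α, (if v ∈ S then x else 1) = #S * x + #Sᶜ := by
    rw [sum_ite, sum_const, sum_const, filter_mem_eq_inter, univ_inter, ← compl_filter,
      filter_mem_eq_inter, univ_inter, nsmul_eq_mul, nsmul_one]
  simp_rw [factor, ← single, ← card_univ, ← prod_const, prod_univ_sum, piFinset_univ]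

lemma card_filter_card_filter_mem_lt_le [DecidableEq ι] [Nonempty α] (S : Finset α) (a : ℕ) :
    (#{c : ι → α | #{i | c i ∈ S} < a} : ℝ) ≤
      2 ^ a * Real.exp (-(card ι * (#S / card α) / 2)) * card α ^ card ι := by
  have : (0 : ℝ) < card α := mod_cast card_pos
  have markov : (#{c : ι → α | #{i | c i ∈ S} < a} : ℝ) * (1 / 2) ^ a ≤
      ∑ c : ι → α, (1 / 2 : ℝ) ^ #{i | c i ∈ S} := by
    rw [← nsmul_eq_mul, ← sum_const]
    refine (sum_le_sum fun c hc ↦ ?_).trans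
      (sum_le_sum_of_subset_of_nonneg (filter_subset _ univ) fun c _ _ ↦ by positivity)
    exact pow_le_pow_of_le_one (by norm_num) (by norm_num) (mem_filter.1 hc).2.le
  have base : #S * (1 / 2) + #Sᶜ ≤ Real.exp (-(#S / card α / 2)) * card α := by
    have hcompl : (#Sᶜ : ℝ) = card α - #S := by
      rw [card_compl, Nat.cast_sub (card_le_univ S)]
    calc (#S * (1 / 2) + #Sᶜ : ℝ) = (-(#S / card α / 2) + 1) * card α := by
          rw [hcompl]; field_simp; ring
      _ ≤ _ := by gcongr; exact Real.add_one_le_exp _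
  calc (#{c : ι → α | #{i | c i ∈ S} < a} : ℝ)
      = 2 ^ a * (#{c : ι → α | #{i | c i ∈ S} < a} * (1 / 2) ^ a) := by
        rw [mul_left_comm, ← mul_pow]; norm_num
    _ ≤ 2 ^ a * (#S * (1 / 2) + #Sᶜ) ^ card ι := by
        rw [← sum_pow_card_filter_mem]; gcongr
    _ ≤ 2 ^ a * (Real.exp (-(#S / card α / 2)) * card α) ^ card ι := by gcongr
    _ = _ := by rw [mul_pow, ← Real.exp_nat_mul, mul_assoc]; ring_nf

lemma exists_forall_le_card_filter_mem [Nonempty α] {κ : Type*} (F : Finset κ) (S : κ → Finset α)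
    (a : κ → ℕ)
    (h : ∑ x ∈ F, 2 ^ a x * Real.exp (-(card ι * (#(S x) / card α) / 2)) < 1) :
    ∃ c : ι → α, ∀ x ∈ F, a x ≤ #{i | c i ∈ S x} := by
  classical
  by_contra! hbad
  have hcover : (univ : Finset (ι → α)) ⊆ F.biUnion fun x ↦ {c | #{i | c i ∈ S x} < a x} := by
    intro c _
    obtain ⟨x, hx, hlt⟩ := hbad c
    exact mem_biUnion.2 ⟨x, hx, mem_filter.2 ⟨mem_univ c, hlt⟩⟩
  have hα : (0 : ℝ) < card α ^ card ι := pow_pos (mod_cast card_pos) _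
  have hcount : (card α ^ card ι : ℝ) < card α ^ card ι := by
    calc (card α ^ card ι : ℝ) ≤ ∑ x ∈ F, (#{c : ι → α | #{i | c i ∈ S x} < a x} : ℝ) := by
          have := (card_le_card hcover).trans card_biUnion_le
          rw [card_univ, card_fun] at this
          exact_mod_cast this
      _ ≤ ∑ x ∈ F, 2 ^ a x * Real.exp (-(card ι * (#(S x) / card α) / 2)) * card α ^ card ι :=
          sum_le_sum fun x _ ↦ card_filter_card_filter_mem_lt_le (S x) (a x)
      _ < card α ^ card ι := by
          rw [← sum_mul]
          exact mul_lt_of_lt_one_left hα h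
  exact hcount.false

end RandomPlacement

section UnionBound

open Finset

variable {α : Type*}

lemma sum_powerset_pow_card {R : Type*} [CommSemiring R] (s : Finset α) (q : R) :
    ∑ A ∈ s.powerset, q ^ #A = (q + 1) ^ #s := by
  simpa using sum_pow_mul_eq_add_pow q 1 s

lemma add_one_pow_le_exp {q : ℝ} (hq : -1 ≤ q) (N : ℕ) : (q + 1) ^ N ≤ Real.exp (N * q) := by
  rw [Real.exp_nat_mul]
  exact pow_le_pow_left₀ (by linarith) (Real.add_one_le_exp q) N

variable [DecidableEq α]

lemma sum_powerset_erase_empty_pow_card_le {s : Finset α} {q : ℝ} (hq : 0 ≤ q)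
    (hsq : #s * q ≤ 1) : ∑ A ∈ s.powerset.erase ∅, q ^ #A ≤ 2 * (#s * q) := by
  have hsum := add_sum_erase s.powerset (fun A ↦ q ^ #A) (empty_mem_powerset s)
  rw [sum_powerset_pow_card, card_empty, pow_zero] at hsum
  have hexp := Real.abs_exp_sub_one_le (x := #s * q) (by rwa [abs_of_nonneg (by positivity)])
  rw [abs_of_nonneg (a := #s * q) (by positivity)] at hexp
  linarith [le_abs_self (Real.exp (#s * q) - 1), add_one_pow_le_exp (by linarith : -1 ≤ q) #s]

lemma two_pow_mul_exp_neg_le {n D x : ℝ} {a : ℕ} (hn : 2 ≤ n)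
    (hx : 9 * min (a * Real.log n) D ≤ x) :
    2 ^ a * Real.exp (-x) ≤ (n⁻¹ ^ 8) ^ a + 2 ^ a * Real.exp (-(9 * D)) := by
  have hexp : Real.exp (-x) ≤ (n⁻¹ ^ 9) ^ a + Real.exp (-(9 * D)) := by
    have hpow : (n⁻¹ ^ 9) ^ a = Real.exp (-(9 * (a * Real.log n))) := by
      rw [← pow_mul, ← Real.exp_log (by positivity : (0 : ℝ) < n⁻¹), ← Real.exp_nat_mul,
        Real.log_inv]
      push_cast
      ring_nf
    rw [hpow]
    rcases min_le_iff.1 (le_refl (min (a * Real.log n) D)) with h | h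
    · exact (Real.exp_le_exp.2 (by linarith)).trans (le_add_of_nonneg_right (by positivity))
    · exact (Real.exp_le_exp.2 (by linarith)).trans (le_add_of_nonneg_left (by positivity))
  calc 2 ^ a * Real.exp (-x) ≤ (2 * n⁻¹ ^ 9) ^ a + 2 ^ a * Real.exp (-(9 * D)) := by
        rw [mul_pow, ← mul_add]; gcongr
    _ ≤ _ := by
        gcongr
        calc 2 * n⁻¹ ^ 9 = (2 * n⁻¹) * n⁻¹ ^ 8 := by ring
          _ ≤ n⁻¹ ^ 8 := by
            refine mul_le_of_le_one_left (by positivity) ?_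
            rwa [← div_eq_mul_inv, div_le_one (by positivity)]

/- The two terms of the bound come from the two values of the minimum: where it is `#A * log n` the
sum over `A` is geometric, and where it is `D` the total weight `∑ 2 ^ #A = 3 ^ #s` is at most
`exp (2 * D)`. -/
lemma sum_powerset_erase_empty_two_pow_mul_exp_neg_le {n D : ℝ} (hn : 2 ≤ n) {s : Finset α}
    (hsn : #s ≤ n) (hsD : #s ≤ D) {x : Finset α → ℝ}
    (hx : ∀ A ⊆ s, A.Nonempty → 9 * min (#A * Real.log n) D ≤ x A) :
    ∑ A ∈ s.powerset.erase ∅, 2 ^ #A * Real.exp (-x A) ≤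
      2 * n⁻¹ ^ 7 + Real.exp (-(7 * D)) := by
  have hsq : #s * n⁻¹ ^ 8 ≤ n⁻¹ ^ 7 := by
    calc #s * n⁻¹ ^ 8 ≤ n * n⁻¹ ^ 8 := by gcongr
      _ = n⁻¹ ^ 7 := by field_simp
  have hsmall : ∑ A ∈ s.powerset.erase ∅, (n⁻¹ ^ 8) ^ #A ≤ 2 * n⁻¹ ^ 7 := by
    refine (sum_powerset_erase_empty_pow_card_le (by positivity) ?_).trans (by gcongr)
    exact hsq.trans (pow_le_one₀ (by positivity) (inv_le_one_of_one_le₀ (by linarith)))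
  have hlarge : ∑ A ∈ s.powerset.erase ∅, 2 ^ #A * Real.exp (-(9 * D)) ≤ Real.exp (-(7 * D)) := by
    calc ∑ A ∈ s.powerset.erase ∅, 2 ^ #A * Real.exp (-(9 * D))
        ≤ ∑ A ∈ s.powerset, 2 ^ #A * Real.exp (-(9 * D)) :=
          sum_le_sum_of_subset_of_nonneg (erase_subset _ _) fun _ _ _ ↦ by positivity
      _ = (2 + 1) ^ #s * Real.exp (-(9 * D)) := by rw [← sum_mul, sum_powerset_pow_card]
      _ ≤ Real.exp (D * 2) * Real.exp (-(9 * D)) := by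
          gcongr
          exact (add_one_pow_le_exp (by norm_num) _).trans (by gcongr)
      _ = Real.exp (-(7 * D)) := by rw [← Real.exp_add]; ring_nf
  calc ∑ A ∈ s.powerset.erase ∅, 2 ^ #A * Real.exp (-x A)
      ≤ ∑ A ∈ s.powerset.erase ∅,
          ((n⁻¹ ^ 8) ^ #A + 2 ^ #A * Real.exp (-(9 * D))) := by
        refine sum_le_sum fun A hA ↦ ?_
        rw [mem_erase, mem_powerset] at hA
        exact two_pow_mul_exp_neg_le hn (hx A hA.2 (nonempty_iff_ne_empty.2 hA.1))
    _ ≤ _ := by rw [sum_add_distrib]; gcongr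

lemma sum_sum_powerset_erase_empty_two_pow_mul_exp_neg_lt_one [Fintype α] {D : ℝ}
    (hα : 2 ≤ Fintype.card α) (hD : Real.log (Fintype.card α) ≤ 3 * D) {N : α → Finset α}
    (hN : ∀ v, #(N v) ≤ D) {x : Finset α → ℝ}
    (hx : ∀ v, ∀ A ⊆ N v, A.Nonempty → 9 * min (#A * Real.log (Fintype.card α)) D ≤ x A) :
    ∑ v, ∑ A ∈ (N v).powerset.erase ∅, 2 ^ #A * Real.exp (-x A) < 1 := by
  set n := Fintype.card α
  have hn : (2 : ℝ) ≤ n := mod_cast hα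
  have hinv : (n : ℝ)⁻¹ ≤ 1 / 2 := by
    rw [one_div]; exact inv_anti₀ two_pos hn
  have hlog : 0 ≤ Real.log n := Real.log_nonneg (by linarith)
  have hexp : Real.exp (-(7 * D)) ≤ (n : ℝ)⁻¹ ^ 2 := by
    rw [← Real.exp_log (by positivity : (0 : ℝ) < (n : ℝ)⁻¹), ← Real.exp_nat_mul, Real.log_inv]
    gcongr
    push_cast
    linarith
  calc ∑ v, ∑ A ∈ (N v).powerset.erase ∅, 2 ^ #A * Real.exp (-x A)
      ≤ ∑ _v : α, (2 * (n : ℝ)⁻¹ ^ 7 + (n : ℝ)⁻¹ ^ 2) := sum_le_sum fun v _ ↦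
        (sum_powerset_erase_empty_two_pow_mul_exp_neg_le hn (mod_cast card_le_univ _) (hN v)
          (hx v)).trans (by gcongr)
    _ = 2 * (n : ℝ)⁻¹ ^ 6 + (n : ℝ)⁻¹ := by
        rw [sum_const, card_univ, nsmul_eq_mul]
        change (n : ℝ) * _ = _
        field_simp
    _ ≤ 2 * (1 / 2) ^ 6 + 1 / 2 := by gcongr
    _ < 1 := by norm_num

end UnionBound

lemma log_le_three_mul_pow {x d : ℝ} {j : ℕ} (hx : 0 < x) (hd : 1 ≤ d) (hj : 1 ≤ j)
    (h : x ≤ d ^ (2 * j + 1)) : Real.log x ≤ 3 * d ^ j := by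
  have hj' : (1 : ℝ) ≤ j := mod_cast hj
  calc Real.log x ≤ Real.log (d ^ (2 * j + 1)) := Real.log_le_log hx h
    _ = (2 * j + 1) * Real.log d := by rw [Real.log_pow]; push_cast; rfl
    _ ≤ 3 * (j * Real.log d) := by nlinarith [Real.log_nonneg hd]
    _ = 3 * Real.log (d ^ j) := by rw [Real.log_pow]
    _ ≤ 3 * d ^ j := by
        gcongr
        exact Real.log_le_self (by positivity)

lemma le_pow_of_rpow_one_div_le {x d : ℝ} {p : ℕ} (hx : 0 ≤ x) (hp : p ≠ 0)
    (h : x ^ (1 / (p : ℝ)) ≤ d) : x ≤ d ^ p := by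
  calc x = (x ^ (1 / (p : ℝ))) ^ p := by rw [one_div, Real.rpow_inv_natCast_pow hx hp]
    _ ≤ d ^ p := by gcongr

lemma min_mul_le_mul_min {n L a d D β : ℝ} {j : ℕ} (hn : 0 ≤ n) (ha : 0 ≤ a) (hd : 0 ≤ d)
    (hD : d ^ j ≤ D) (hβ1 : 1 ≤ β) (hβ : n * L ≤ d ^ (2 * j + 1) * β) :
    min (a * L) D * n ≤ D * β * min (a * d ^ (j + 1)) n := by
  have hD0 : 0 ≤ D := (pow_nonneg hd j).trans hD
  rw [min_mul_of_nonneg _ _ hn, mul_min_of_nonneg _ _ (by positivity)]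
  refine min_le_min ?_ (by gcongr; exact le_mul_of_one_le_right hD0 hβ1)
  calc a * L * n = a * (n * L) := by ring
    _ ≤ a * (d ^ (2 * j + 1) * β) := by gcongr
    _ = d ^ j * β * (a * d ^ (j + 1)) := by ring
    _ ≤ D * β * (a * d ^ (j + 1)) := by gcongr

lemma exists_edist_le_one_and_edist_le {V : Type*} (G : SimpleGraph V) {u w : V} {t : ℕ}
    (h : G.edist u w ≤ t + 1) : ∃ v, G.edist u v ≤ 1 ∧ G.edist v w ≤ t := by
  obtain ⟨p, hp⟩ := G.exists_walk_of_edist_ne_top (ne_top_of_le_ne_top (by simp) h)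
  cases p with
  | nil => exact ⟨u, by simp, by simp⟩
  | cons huv q =>
    refine ⟨_, (SimpleGraph.edist_eq_one_iff_adj.2 huv).le, (SimpleGraph.edist_le q).trans ?_⟩
    rw [← hp, SimpleGraph.Walk.length_cons] at h
    exact_mod_cast Nat.le_of_succ_le_succ (mod_cast h)

namespace KGraph

variable {n k : ℕ}

/-- The 2-section of a hypergraph: the simple graph joining distinct vertices that share an edge.
Its distance is that of the hypergraph, which gives access to the metric theory of simple graphs. -/
def twoSection (G : KGraph n k) : SimpleGraph (Fin n) where
  Adj x y := x ≠ y ∧ ∃ e ∈ G.edges, x ∈ e ∧ y ∈ e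
  symm := ⟨fun _ _ ⟨hne, e, he, hx, hy⟩ ↦ ⟨hne.symm, e, he, hy, hx⟩⟩
  loopless := ⟨fun _ h ↦ h.1 rfl⟩

variable {G : KGraph n k}

lemma isLoosePath_singleton {x y : Fin n} {e : Finset (Fin n)} :
    G.IsLoosePath x y [e] ↔ e ∈ G.edges ∧ x ∈ e ∧ y ∈ e := by
  refine ⟨fun ⟨_, he, hx, hy, _⟩ ↦ ?_, fun ⟨he, hx, hy⟩ ↦ ?_⟩
  · exact ⟨by simpa using he, by simpa using hx, by simpa using hy⟩
  · exact ⟨by simp, by simpa, by simpa, by simpa, .singleton e⟩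

lemma isLoosePath_cons_cons {x y : Fin n} {e f : Finset (Fin n)} {l : List (Finset (Fin n))} :
    G.IsLoosePath x y (e :: f :: l) ↔
      e ∈ G.edges ∧ x ∈ e ∧ ∃ z ∈ e, G.IsLoosePath z y (f :: l) := by
  refine ⟨fun ⟨_, hedges, hx, hy, hchain⟩ ↦ ?_,
    fun ⟨he, hx, z, hz, _, hedges, hzf, hy, hchain⟩ ↦ ?_⟩
  · obtain ⟨⟨z, hz⟩, hchain'⟩ := List.isChain_cons_cons.1 hchain
    obtain ⟨hze, hzf⟩ := Finset.mem_inter.1 hz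
    rw [List.forall_mem_cons] at hedges
    exact ⟨hedges.1, by simpa using hx, z, hze, by simp, hedges.2, by simpa, by simpa using hy,
      hchain'⟩
  · have hef : (e ∩ f).Nonempty := ⟨z, Finset.mem_inter.2 ⟨hz, by simpa using hzf⟩⟩
    exact ⟨by simp, List.forall_mem_cons.2 ⟨he, hedges⟩, by simpa, by simpa using hy,
      List.isChain_cons_cons.2 ⟨hef, hchain⟩⟩

lemma edist_twoSection_le_one {x y : Fin n} {e : Finset (Fin n)} (he : e ∈ G.edges) (hx : x ∈ e)
    (hy : y ∈ e) : G.twoSection.edist x y ≤ 1 := by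
  rw [SimpleGraph.edist_le_one_iff_adj_or_eq]
  exact (eq_or_ne x y).symm.imp_left fun hne ↦ ⟨hne, e, he, hx, hy⟩

lemma IsLoosePath.edist_twoSection_le {x y : Fin n} {l : List (Finset (Fin n))}
    (h : G.IsLoosePath x y l) : G.twoSection.edist x y ≤ l.length := by
  induction l generalizing x with
  | nil => exact absurd rfl h.1
  | cons e l ih =>
    cases l with
    | nil =>
      obtain ⟨he, hx, hy⟩ := isLoosePath_singleton.1 h
      simpa using edist_twoSection_le_one he hx hy
    | cons f l =>
      obtain ⟨he, hx, z, hz, hzy⟩ := isLoosePath_cons_cons.1 h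
      calc G.twoSection.edist x y ≤ G.twoSection.edist x z + G.twoSection.edist z y :=
            SimpleGraph.edist_triangle
        _ ≤ 1 + (f :: l).length := add_le_add (edist_twoSection_le_one he hx hz) (ih hzy)
        _ = (e :: f :: l).length := by rw [add_comm]; simp

lemma exists_isLoosePath_length_eq {x y : Fin n} (p : G.twoSection.Walk x y) (hp : ¬p.Nil) :
    ∃ l, G.IsLoosePath x y l ∧ l.length = p.length := by
  induction p with
  | nil => exact absurd .nil hp
  | @cons x z y hadj q ih =>
    obtain ⟨-, e, he, hx, hz⟩ := hadj
    cases q with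
    | nil => exact ⟨[e], isLoosePath_singleton.2 ⟨he, hx, hz⟩, rfl⟩
    | cons hzw q =>
      obtain ⟨l, hl, hlen⟩ := ih SimpleGraph.Walk.not_nil_cons
      cases l with
      | nil => exact absurd rfl hl.1
      | cons f l =>
        exact ⟨e :: f :: l, isLoosePath_cons_cons.2 ⟨he, hx, z, hz, hl⟩, congrArg (· + 1) hlen⟩

lemma dist_eq_edist_twoSection (x y : Fin n) : G.dist x y = G.twoSection.edist x y := by
  rcases eq_or_ne x y with rfl | hne
  · simp [dist]
  rw [dist, if_neg hne]
  apply le_antisymm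
  · refine le_iInf fun p ↦ ?_
    obtain ⟨l, hl, hlen⟩ := exists_isLoosePath_length_eq p (SimpleGraph.Walk.not_nil_of_ne hne)
    exact sInf_le ⟨l, hl, congrArg _ hlen⟩
  · rw [le_sInf_iff, Set.forall_mem_image]
    exact fun l hl ↦ hl.edist_twoSection_le

lemma dist_comm (x y : Fin n) : G.dist x y = G.dist y x := by
  simp only [dist_eq_edist_twoSection, SimpleGraph.edist_comm]

lemma dist_triangle (x y z : Fin n) : G.dist x z ≤ G.dist x y + G.dist y z := by
  simpa only [dist_eq_edist_twoSection] using SimpleGraph.edist_triangle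

lemma exists_dist_le_one_and_dist_le {x y : Fin n} {t : ℕ} (h : G.dist x y ≤ t + 1) :
    ∃ z, G.dist x z ≤ 1 ∧ G.dist z y ≤ t := by
  simp only [dist_eq_edist_twoSection] at h ⊢
  exact exists_edist_le_one_and_edist_le _ h

lemma mem_vNhd {A : Set (Fin n)} {r : ℕ} {v : Fin n} :
    v ∈ G.vNhd A r ↔ ∃ u ∈ A, G.dist u v ≤ r := by
  simp [vNhd, setDist, ← ENat.lt_add_one_iff (ENat.natCast_ne_top r), iInf_lt_iff]

lemma copsWin_of_forall_exists_eq {m : ℕ} {c τ : Fin m → Fin n} {r : Fin n} {t : ℕ}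
    (hc : ∀ i, G.dist (c i) (τ i) ≤ t + 1) (hr : ∀ u, G.dist r u ≤ t → ∃ i, τ i = u) :
    G.CopsWin c r := by
  induction t generalizing c r with
  | zero =>
    obtain ⟨i, hi⟩ := hr r (by simp [dist])
    exact .stepCaught c τ r (by simpa using hc) i hi
  | succ t ih =>
    choose c' hmove hc' using fun i ↦ exists_dist_le_one_and_dist_le (hc i)
    refine .step c c' r hmove fun r' hr' ↦ ih (mod_cast hc') fun u hu ↦ hr u ?_
    calc G.dist r u ≤ G.dist r r' + G.dist r' u := dist_triangle r r' u
      _ ≤ 1 + t := add_le_add hr' hu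
      _ = (t + 1 : ℕ) := by rw [add_comm]; simp

open Finset

open Classical in
lemma copsWin_of_hall {m j : ℕ} {c : Fin m → Fin n} {r : Fin n}
    (hall : ∀ A : Finset (Fin n), (A : Set (Fin n)) ⊆ G.vNhd {r} j →
      #A ≤ #{i | c i ∈ G.vNhd A (j + 1)}) :
    G.CopsWin c r := by
  let near (u : G.vNhd {r} j) : Finset (Fin m) := {i | G.dist (c i) u ≤ j + 1}
  have hnear (s : Finset (G.vNhd {r} j)) : #s ≤ #(s.biUnion near) := by
    calc #s = #(s.map (Function.Embedding.subtype _)) := (card_map _).symm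
      _ ≤ _ := hall _ (by simp)
      _ ≤ #(s.biUnion near) := card_le_card fun i hi ↦ by
          obtain ⟨_, hu, hdist⟩ := mem_vNhd.1 (mem_filter.1 hi).2
          obtain ⟨u, hus, rfl⟩ := mem_map.1 hu
          exact mem_biUnion.2 ⟨u, hus, by simpa [near, dist_comm (c i)] using hdist⟩
  obtain ⟨f, hf, hfnear⟩ := (all_card_le_biUnion_card_iff_exists_injective near).1 hnear
  refine copsWin_of_forall_exists_eq (τ := Function.extend f (↑) c) (t := j) (fun i ↦ ?_)
    fun u hu ↦ ⟨f ⟨u, mem_vNhd.2 ⟨r, rfl, hu⟩⟩, hf.extend_apply _ _ _⟩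
  by_cases hi : ∃ u, f u = i
  · obtain ⟨u, rfl⟩ := hi
    rw [hf.extend_apply]
    exact (mem_filter.1 (hfnear u)).2
  · simp [Function.extend_apply' _ _ _ hi, dist]

lemma copNumber_le_of_forall_mul_min_le {j m : ℕ} {D : ℝ} (hn : 2 ≤ n)
    (hD : Real.log n ≤ 3 * D) (hball : ∀ v, (G.vNhd {v} j).ncard ≤ D)
    (hexp : ∀ A : Finset (Fin n), 18 * min (#A * Real.log n) D * n ≤
      m * (G.vNhd A (j + 1)).ncard) :
    G.copNumber ≤ m := by
  classical
  have : NeZero n := ⟨by omega⟩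
  let ball (v : Fin n) : Finset (Fin n) := (G.vNhd {v} j).toFinset
  let weight (A : Finset (Fin n)) : ℝ := m * ((G.vNhd A (j + 1)).ncard / n) / 2
  have hsum : ∑ v, ∑ A ∈ (ball v).powerset.erase ∅, 2 ^ #A * Real.exp (-weight A) < 1 := by
    refine sum_sum_powerset_erase_empty_two_pow_mul_exp_neg_lt_one (D := D) (by simpa)
      (by simpa) (fun v ↦ ?_) fun v A _ _ ↦ ?_
    · rw [← Set.ncard_eq_toFinset_card']
      exact hball v
    · rw [Fintype.card_fin, le_div_iff₀ two_pos, ← mul_div_assoc, le_div_iff₀ (by positivity)]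
      linarith [hexp A]
  obtain ⟨c, hc⟩ := exists_forall_le_card_filter_mem (ι := Fin m)
    (univ.sigma fun v ↦ (ball v).powerset.erase ∅)
    (fun x ↦ (G.vNhd x.2 (j + 1)).toFinset) (fun x ↦ #x.2)
    (by simpa only [sum_sigma, ← Set.ncard_eq_toFinset_card', Fintype.card_fin] using hsum)
  refine Nat.sInf_le ⟨c, fun r ↦ copsWin_of_hall (j := j) fun A hA ↦ ?_⟩
  rcases A.eq_empty_or_nonempty with rfl | hne
  · simp
  · simpa using hc ⟨r, A⟩ (by simpa [ball, hne.ne_empty] using hA)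

lemma copNumber_le_of_expansion {j m : ℕ} {ξ d D β : ℝ} (hn : 2 ≤ n) (hξ : 0 < ξ) (hd : 0 ≤ d)
    (hlog : Real.log n ≤ 3 * D) (hdD : d ^ j ≤ D) (hβ1 : 1 ≤ β)
    (hβ : n * Real.log n ≤ d ^ (2 * j + 1) * β) (hm : 18 * (ξ⁻¹ * D * β) ≤ m)
    (hball : ∀ v, (G.vNhd {v} j).ncard ≤ D)
    (hexp : ∀ A : Set (Fin n), ξ * min (A.ncard * d ^ (j + 1)) n ≤ (G.vNhd A (j + 1)).ncard) :
    G.copNumber ≤ m := by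
  refine copNumber_le_of_forall_mul_min_le hn hlog hball fun A ↦ ?_
  calc 18 * min (#A * Real.log n) D * n
      ≤ 18 * (D * β * min (#A * d ^ (j + 1)) n) := by
        linarith [min_mul_le_mul_min n.cast_nonneg (Nat.cast_nonneg #A) hd hdD hβ1 hβ]
    _ = 18 * (ξ⁻¹ * D * β) * (ξ * min (#A * d ^ (j + 1)) n) := by field_simp
    _ ≤ m * (G.vNhd A (j + 1)).ncard := by
        gcongr
        simpa using hexp A

lemma avgDeg_le : G.avgDeg ≤ n := by
  refine div_le_of_le_mul₀ n.cast_nonneg n.cast_nonneg ?_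
  calc ∑ v, ((G.vNhd {v} 1).ncard : ℝ) ≤ ∑ _v : Fin n, (n : ℝ) := by
        gcongr with v
        simpa using Set.ncard_le_card (G.vNhd {v} 1)
    _ = n * n := by simp

lemma IsExpanding.uniformity_le {ξ : ℝ} (hG : G.IsExpanding ξ) : k ≤ n :=
  mod_cast hG.1.trans avgDeg_le

end KGraph

theorem cop_number_expanding_regime_a_general {n k : ℕ} (hn : 2 ≤ n) {ξ d : ℝ} (hξ0 : 0 < ξ)
    (hξ1 : ξ ≤ 1) (G : KGraph n k) {j : ℕ} (hj : 1 ≤ j)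
    (hd : (n : ℝ) ^ ((1 : ℝ) / (2 * (j : ℝ) + 1)) ≤ d)
    (hball : ∀ v, (G.vNhd {v} j).ncard ≤ ξ⁻¹ * d ^ j)
    (hexp : ∀ A : Set (Fin n), ξ * min (A.ncard * d ^ (j + 1)) n ≤ (G.vNhd A (j + 1)).ncard) :
    (G.copNumber : ℝ) ≤ 20 * ξ⁻¹ ^ 2 * d ^ j *
      ((⌈(n : ℝ) / d ^ (2 * j + 1) * Real.log n⌉ : ℤ) : ℝ) := by
  have hn2 : (2 : ℝ) ≤ n := mod_cast hn
  have hd1 : 1 ≤ d := (Real.one_le_rpow (by linarith) (by positivity)).trans hd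
  have hnd : (n : ℝ) ≤ d ^ (2 * j + 1) :=
    le_pow_of_rpow_one_div_le n.cast_nonneg (by omega) (mod_cast hd)
  have hξ : 1 ≤ ξ⁻¹ := (one_le_inv₀ hξ0).2 hξ1
  have hdD : d ^ j ≤ ξ⁻¹ * d ^ j := le_mul_of_one_le_left (by positivity) hξ
  have hlog : Real.log n ≤ 3 * (ξ⁻¹ * d ^ j) :=
    (log_le_three_mul_pow (by positivity) hd1 hj hnd).trans (by gcongr)
  set β : ℝ := ((⌈(n : ℝ) / d ^ (2 * j + 1) * Real.log n⌉ : ℤ) : ℝ)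
  have hβ1 : 1 ≤ β := by
    have : 0 < Real.log n := Real.log_pos (by linarith)
    exact Int.cast_one_le_of_pos (Int.ceil_pos.2 (by positivity))
  have hβ : n * Real.log n ≤ d ^ (2 * j + 1) * β := by
    rw [← div_le_iff₀' (by positivity), ← div_mul_eq_mul_div]
    exact Int.le_ceil _
  have hy : 1 ≤ ξ⁻¹ * (ξ⁻¹ * d ^ j) * β := one_le_mul_of_one_le_of_one_le
    (one_le_mul_of_one_le_of_one_le hξ ((one_le_pow₀ hd1).trans hdD)) hβ1
  rw [show 20 * ξ⁻¹ ^ 2 * d ^ j * β = 20 * (ξ⁻¹ * (ξ⁻¹ * d ^ j) * β) by ring]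
  refine le_trans (mod_cast ?_) (Nat.floor_le (by positivity))
  refine KGraph.copNumber_le_of_expansion hn hξ0 (by positivity) hlog hdD hβ1 hβ ?_ hball hexp
  linarith [Nat.lt_floor_add_one (20 * (ξ⁻¹ * (ξ⁻¹ * d ^ j) * β))]

/-- regime (a). -/
theorem cop_number_expanding_regime_a (n k : ℕ) (hk : 2 ≤ k) (ξ : ℝ) (hξ0 : 0 < ξ) (hξ1 : ξ ≤ 1)
    (G : KGraph n k) (hG : G.IsExpanding ξ) (j : ℕ) (hj : 1 ≤ j)
    (hd1 : (n : ℝ) ^ ((1 : ℝ) / (2 * (j : ℝ) + 1)) ≤ G.avgDeg)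
    (hd2 : G.avgDeg ≤ ((n : ℝ) / k) ^ ((1 : ℝ) / (2 * (j : ℝ)))) :
    (G.copNumber : ℝ) ≤ 20 * ξ⁻¹ ^ 2 * G.avgDeg ^ j *
      ((⌈(n : ℝ) / G.avgDeg ^ (2 * j + 1) * Real.log n⌉ : ℤ) : ℝ) :=
  cop_number_expanding_regime_a_general (hk.trans hG.uniformity_le) hξ0 hξ1 G hj hd1
    (fun v ↦ by simpa using (hG.2.2.1 {v} j hj).2) fun A ↦ (hG.2.2.1 A (j + 1) (by omega)).1
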